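/- arXiv:1002.3938 — 2 statements merged into one kernel-verified Lean document; each statement's English description precedes it below -/
import Mathlib

section
/- Let n ≥ 1 and k, r ≥ 1 be integers. The polynomial G_{k,r} is Schur-concave on [0,∞)^n: whenever x, y ∈ [0,∞)^n and x majorizes y, one has G_{k,r}(x) ≤ G_{k,r}(y). -/
open Finset MeasureTheory

/-- `G n k r x`: the sum over all n-tuples p of nonnegative integers with `∑ i, p i = k`
and at least `r` nonzero entries, of `∏ i, x i ^ p i / (p i)!`. -/
noncomputable def G (n k r : ℕ) (x : Fin n → ℝ) : ℝ :=
  ∑ κ ∈ Finset.univ.filter (fun κ : Fin n → Fin (k + 1) =>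
      (∑ i, (κ i : ℕ)) = k ∧ r ≤ (Finset.univ.filter fun i => (κ i : ℕ) ≠ 0).card),
    ∏ i, x i ^ (κ i : ℕ) / (Nat.factorial (κ i : ℕ))

/-- The sum of the `m` largest entries of `x`, i.e. the largest sum of `m` entries. -/
noncomputable def sMax (n m : ℕ) (x : Fin n → ℝ) : ℝ :=
  sSup {s : ℝ | ∃ A : Finset (Fin n), A.card = m ∧ s = ∑ i ∈ A, x i}

/-- `x` majorizes `y`: equal total sums, and for each `1 ≤ m ≤ n-1` the sum of the
`m` largest entries of `x` is at least that of `y`. -/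
def Majorizes (n : ℕ) (x y : Fin n → ℝ) : Prop :=
  (∑ i, x i = ∑ i, y i) ∧ ∀ m : ℕ, 1 ≤ m → m ≤ n - 1 → sMax n m y ≤ sMax n m x


noncomputable def TT {n : ℕ} (x : Fin n → ℝ) (s : Finset (Fin n)) (k r : ℕ) : ℝ :=
  ∑ p ∈ (s.piAntidiag k).filter (fun p : Fin n → ℕ => r ≤ (s.filter fun i => p i ≠ 0).card),
    ∏ i ∈ s, x i ^ (p i) / (Nat.factorial (p i))

lemma TT_nonneg {n : ℕ} {x : Fin n → ℝ} (hx : ∀ i, 0 ≤ x i) (s : Finset (Fin n)) (k r : ℕ) :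
    0 ≤ TT x s k r :=
  Finset.sum_nonneg fun p _ => Finset.prod_nonneg fun i _ => by have := hx i; positivity

lemma TT_anti {n : ℕ} {x : Fin n → ℝ} (hx : ∀ i, 0 ≤ x i) (s : Finset (Fin n)) (k : ℕ) {r r' : ℕ}
    (h : r ≤ r') : TT x s k r' ≤ TT x s k r := by
  apply Finset.sum_le_sum_of_subset_of_nonneg
  · intro p; simp only [Finset.mem_filter]; rintro ⟨a, b⟩; exact ⟨a, h.trans b⟩
  · intro p _ _; exact Finset.prod_nonneg fun i _ => by have := hx i; positivity

lemma TT_congr {n : ℕ} {x y : Fin n → ℝ} (s : Finset (Fin n)) (h : ∀ i ∈ s, x i = y i) (k r : ℕ) :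
    TT x s k r = TT y s k r := by
  unfold TT
  refine Finset.sum_congr rfl fun p _ => Finset.prod_congr rfl fun i hi => by rw [h i hi]

lemma TT_insert {n : ℕ} (x : Fin n → ℝ) (s : Finset (Fin n)) (i : Fin n) (hi : i ∉ s) (k r : ℕ) :
    TT x (insert i s) k r = ∑ ab ∈ antidiagonal k,
      x i ^ ab.1 / (Nat.factorial ab.1) * TT x s ab.2 (r - if ab.1 = 0 then 0 else 1) := by
  unfold TT
  simp_rw [Finset.mul_sum]
  rw [Finset.sum_sigma']
  refine Finset.sum_bij' (fun p _ => ⟨(p i, k - p i), Function.update p i 0⟩)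
    (fun q _ => Function.update q.2 i q.1.1) ?_ ?_ ?_ ?_ ?_
  · intro p hp
    simp only [mem_filter, mem_piAntidiag, mem_sigma, HasAntidiagonal.mem_antidiagonal, sum_insert hi,
      filter_insert] at hp ⊢
    obtain ⟨⟨h1, h2⟩, h3⟩ := hp
    have e1 : ∑ j ∈ s, Function.update p i 0 j = ∑ j ∈ s, p j :=
      sum_congr rfl fun j hj => Function.update_of_ne (by rintro rfl; exact hi hj) _ _
    have e2 : s.filter (fun j => Function.update p i 0 j ≠ 0) = s.filter (fun j => p j ≠ 0) :=
      filter_congr fun j hj => by rw [Function.update_of_ne (by rintro rfl; exact hi hj)]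
    refine ⟨by omega, ⟨by rw [e1]; omega, ?_⟩, ?_⟩
    · intro j hj
      by_cases hji : j = i
      · subst hji; simp at hj
      · rw [Function.update_of_ne hji] at hj
        simpa [hji] using h2 j hj
    · rw [e2]
      split_ifs at h3 ⊢
      · rw [card_insert_of_notMem (by simp [hi])] at h3; omega
      · simp_all
      · simp_all
  · rintro ⟨⟨a, b⟩, p⟩ hp
    simp only [mem_filter, mem_piAntidiag, mem_sigma, HasAntidiagonal.mem_antidiagonal, sum_insert hi,
      filter_insert] at hp ⊢
    obtain ⟨h0, ⟨h1, h2⟩, h3⟩ := hp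
    have e1 : ∑ j ∈ s, Function.update p i a j = ∑ j ∈ s, p j :=
      sum_congr rfl fun j hj => Function.update_of_ne (by rintro rfl; exact hi hj) _ _
    have e2 : s.filter (fun j => Function.update p i a j ≠ 0) = s.filter (fun j => p j ≠ 0) :=
      filter_congr fun j hj => by rw [Function.update_of_ne (by rintro rfl; exact hi hj)]
    replace h1 : ∑ j ∈ s, p j = b := h1
    refine ⟨⟨by rw [e1]; simp; omega, ?_⟩, ?_⟩
    · intro j hj
      by_cases hji : j = i
      · simp [hji]
      · rw [Function.update_of_ne hji] at hj
        simp [h2 j hj]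
    · rw [e2]
      simp only [Function.update_self]
      by_cases ha : a = 0
      · simpa [ha] using h3
      · simp only [ha, if_false] at h3
        simp only [ha, ne_eq, not_false_eq_true, if_true]
        rw [card_insert_of_notMem (by simp [hi])]; simp only [ne_eq] at h3; omega
  · intro p hp; simp
  · rintro ⟨⟨a, b⟩, p⟩ hp
    simp only [mem_filter, mem_piAntidiag, mem_sigma, HasAntidiagonal.mem_antidiagonal] at hp
    obtain ⟨h0, ⟨h1, h2⟩, h3⟩ := hp
    have : p i = 0 := by by_contra h; exact hi (h2 i h)
    have hb : k - a = b := by omega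
    simp [hb, ← this]
  · intro p hp
    rw [prod_insert hi]
    congr 1
    refine prod_congr rfl fun j hj => ?_
    have hji : j ≠ i := by rintro rfl; exact hi hj
    simp [Function.update_of_ne hji]

lemma G_eq_aux (n k r : ℕ) (x : Fin n → ℝ) :
  (∑ κ ∈ Finset.univ.filter (fun κ : Fin n → Fin (k + 1) =>
      (∑ i, (κ i : ℕ)) = k ∧ r ≤ (Finset.univ.filter fun i => (κ i : ℕ) ≠ 0).card),
    ∏ i, x i ^ (κ i : ℕ) / (Nat.factorial (κ i : ℕ)))  = TT x univ k r := by
  unfold TT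
  refine Finset.sum_bij (fun κ _ i => (κ i : ℕ)) ?_ ?_ ?_ ?_
  · intro κ hκ
    simpa using hκ
  · intro a _ b _ h
    funext i
    exact Fin.ext (congrFun h i)
  · intro p hp
    simp only [mem_filter, mem_piAntidiag] at hp
    have : ∀ i, p i < k + 1 := fun i => by
      have := Finset.single_le_sum (f := p) (fun _ _ => Nat.zero_le _) (mem_univ i)
      have h2 : ∑ i, p i = k := hp.1.1
      omega
    refine ⟨fun i => ⟨p i, this i⟩, ?_, rfl⟩
    simpa using ⟨hp.1.1, hp.2⟩
  · intro κ _; rfl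

/-- inner two-variable sum -/
lemma two_var (a b : ℝ) (d r : ℕ) (f : ℕ → ℝ) :
    ∑ p ∈ antidiagonal (d+1), a ^ p.1 / (Nat.factorial p.1) * (b ^ p.2 / (Nat.factorial p.2) *
      f (r - (if p.1 = 0 then 0 else 1) - (if p.2 = 0 then 0 else 1))) =
    (a + b) ^ (d+1) / (Nat.factorial (d+1)) * f (r - 2)
      - (a ^ (d+1) + b ^ (d+1)) / (Nat.factorial (d+1)) * (f (r - 2) - f (r - 1)) := by
  have key : (a + b) ^ (d+1) / (Nat.factorial (d+1)) =
      ∑ p ∈ antidiagonal (d+1), a ^ p.1 / (Nat.factorial p.1) * (b ^ p.2 / (Nat.factorial p.2)) := by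
    rw [Commute.add_pow' (Commute.all a b), Finset.sum_div]
    refine sum_congr rfl fun p hp => ?_
    rw [HasAntidiagonal.mem_antidiagonal] at hp
    have h := Nat.add_choose_mul_factorial_mul_factorial p.1 p.2
    rw [hp, Nat.choose_symm_of_eq_add (by omega : d + 1 = p.2 + p.1)] at h
    have h' : ((d+1).choose p.1 : ℝ) * (Nat.factorial p.1) * (Nat.factorial p.2) = (Nat.factorial (d+1)) := by
      exact_mod_cast h
    have h1 : (Nat.factorial p.1 : ℝ) ≠ 0 := by positivity
    have h2 : (Nat.factorial p.2 : ℝ) ≠ 0 := by positivity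
    have h3 : (Nat.factorial (d+1) : ℝ) ≠ 0 := by positivity
    rw [nsmul_eq_mul]
    field_simp
    rw [← h']; ring
  rw [key, Finset.sum_mul]
  have e : (a ^ (d+1) + b ^ (d+1)) / (Nat.factorial (d+1) : ℝ) * (f (r - 2) - f (r - 1)) =
    ∑ p ∈ antidiagonal (d+1), ((if p = (d+1, 0) then a^(d+1) / (Nat.factorial (d+1)) * (f (r - 2) - f (r - 1)) else 0)
      + (if p = (0, d+1) then b^(d+1) / (Nat.factorial (d+1)) * (f (r - 2) - f (r - 1)) else 0)) := by
    rw [sum_add_distrib, sum_ite_eq', sum_ite_eq']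
    simp
    ring
  rw [e, ← sum_sub_distrib]
  refine sum_congr rfl fun p hp => ?_
  obtain ⟨u, v⟩ := p
  rw [HasAntidiagonal.mem_antidiagonal] at hp
  simp only at hp
  rcases Nat.eq_zero_or_pos u with rfl | hu
  · have : v = d + 1 := by omega
    subst this
    simp; ring
  · rcases Nat.eq_zero_or_pos v with rfl | hv
    · have : u = d + 1 := by omega
      subst this
      simp; ring
    · have : r - 1 - 1 = r - 2 := by omega
      simp [hu.ne', hv.ne', this]; ring

lemma pow_ineq (a b a' b' : ℝ) (d : ℕ) (h1 : 0 ≤ b) (h2 : b ≤ b') (h3 : b' ≤ a')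
    (h4 : a' + b' = a + b) : a' ^ d + b' ^ d ≤ a ^ d + b ^ d := by
  induction d with
  | zero => simp
  | succ d ih =>
    have hb : b ^ d ≤ b' ^ d := pow_le_pow_left₀ h1 h2 d
    have ha : a' ^ d ≤ a ^ d := pow_le_pow_left₀ (by linarith) (by linarith) d
    have hh : b' ^ d ≤ a' ^ d := pow_le_pow_left₀ (by linarith) (by linarith) d
    have : a = a' + (b' - b) := by linarith
    have h5 : 0 ≤ a' := by linarith
    simp only [pow_succ]
    subst this
    nlinarith [mul_nonneg (sub_nonneg.2 h2) (sub_nonneg.2 hb), mul_nonneg (sub_nonneg.2 h2) (sub_nonneg.2 ha), mul_nonneg (sub_nonneg.2 h3) (sub_nonneg.2 ha), mul_nonneg (sub_nonneg.2 h2) (sub_nonneg.2 hh),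
      mul_nonneg (h1.trans h2) (sub_nonneg.2 ih), mul_nonneg h5 (sub_nonneg.2 ih)]

lemma TT_two {n : ℕ} (x : Fin n → ℝ) (s : Finset (Fin n)) (i j : Fin n) (hj : j ∉ s)
    (hi : i ∉ insert j s) (k r : ℕ) :
    TT x (insert i (insert j s)) k r = ∑ dq ∈ antidiagonal k, ∑ p ∈ antidiagonal dq.1,
      x i ^ p.1 / (Nat.factorial p.1) * (x j ^ p.2 / (Nat.factorial p.2) *
        TT x s dq.2 (r - (if p.1 = 0 then 0 else 1) - (if p.2 = 0 then 0 else 1))) := by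
  rw [TT_insert x _ i hi]
  simp_rw [TT_insert x _ j hj, Finset.mul_sum]
  rw [Finset.sum_sigma', Finset.sum_sigma']
  refine Finset.sum_bij' (fun z _ => ⟨(z.1.1 + z.2.1, z.2.2), (z.1.1, z.2.1)⟩)
    (fun z _ => ⟨(z.2.1, z.2.2 + z.1.2), (z.2.2, z.1.2)⟩) ?_ ?_ ?_ ?_ ?_
  · rintro ⟨⟨a, b⟩, ⟨c, d⟩⟩ hz
    simp only [mem_sigma, HasAntidiagonal.mem_antidiagonal] at hz ⊢
    obtain ⟨h1, h2⟩ := hz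
    exact ⟨by omega, by first | rfl | trivial⟩
  · rintro ⟨⟨a, b⟩, ⟨c, d⟩⟩ hz
    simp only [mem_sigma, HasAntidiagonal.mem_antidiagonal] at hz ⊢
    obtain ⟨h1, h2⟩ := hz
    exact ⟨by omega, by first | rfl | trivial⟩
  · rintro ⟨⟨a, b⟩, ⟨c, d⟩⟩ hz
    simp only [mem_sigma, HasAntidiagonal.mem_antidiagonal] at hz
    simp [hz.2]
  · rintro ⟨⟨a, b⟩, ⟨c, d⟩⟩ hz
    simp only [mem_sigma, HasAntidiagonal.mem_antidiagonal] at hz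
    simp [hz.2]
  · rintro ⟨⟨a, b⟩, ⟨c, d⟩⟩ hz
    rfl

lemma TT_step {n : ℕ} (x y : Fin n → ℝ) (hx : ∀ i, 0 ≤ x i) (i j : Fin n) (hij : i ≠ j)
    (h : ∀ l, l ≠ i → l ≠ j → x l = y l) (h2 : x j ≤ y j) (h3 : y j ≤ y i)
    (h4 : y i + y j = x i + x j) (k r : ℕ) : TT x univ k r ≤ TT y univ k r := by
  have hu : (univ : Finset (Fin n)) = insert i (insert j ((univ.erase i).erase j)) := by
    ext l; simp; tauto
  rw [hu, TT_two _ _ _ _ (by simp) (by simp [hij]), TT_two _ _ _ _ (by simp) (by simp [hij])]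
  refine sum_le_sum fun dq _ => ?_
  set s := (univ.erase i).erase j with hs
  have hc : ∀ q t, TT y s q t = TT x s q t := fun q t => TT_congr s (fun l hl => by
    simp only [hs, mem_erase] at hl
    exact (h l hl.2.1 hl.1).symm) q t
  obtain ⟨d, q⟩ := dq
  simp only [hc]
  rcases d with _ | d
  · simp
  · rw [two_var (x i) (x j) d r (fun t => TT x s q t), two_var (y i) (y j) d r (fun t => TT x s q t), h4]
    have h5 := pow_ineq (x i) (x j) (y i) (y j) (d+1) (hx j) h2 h3 h4
    have h6 : TT x s q (r - 1) ≤ TT x s q (r - 2) := TT_anti hx s q (by omega)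
    apply sub_le_sub_left
    apply mul_le_mul_of_nonneg_right _ (by linarith)
    gcongr

/-- transfer chain -/
lemma TT_chain {n : ℕ} (y : Fin n → ℝ) (hy : ∀ i, 0 ≤ y i) (hanti : Antitone y) (k r : ℕ) (N : ℕ) :
    ∀ x : Fin n → ℝ, (∀ i, 0 ≤ x i) → (univ.filter fun i => x i ≠ y i).card ≤ N →
    (∑ i, x i = ∑ i, y i) → (∀ m : Fin n, ∑ i ∈ Iic m, y i ≤ ∑ i ∈ Iic m, x i) →
    TT x univ k r ≤ TT y univ k r := by
  induction N with
  | zero =>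
    intro x hx hN _ _
    have : x = y := by
      funext i
      by_contra h
      have : i ∈ univ.filter fun i => x i ≠ y i := by simp [h]
      rw [card_eq_zero.1 (Nat.le_zero.1 hN)] at this
      simp at this
    rw [this]
  | succ N ih =>
    intro x hx hN hsum hpre
    by_cases hlt : ∃ l, x l < y l
    swap
    · push Not at hlt
      have := (Finset.sum_eq_sum_iff_of_le (s := univ) (f := y) (g := x) (fun i _ => hlt i)).1 hsum.symm
      have : x = y := funext fun i => (this i (mem_univ i)).symm
      rw [this]
    obtain ⟨l, hl, hmin⟩ := WellFounded.has_min (wellFounded_lt (α := Fin n)) {l | x l < y l} hlt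
    simp only [Set.mem_ofPred_eq, not_lt] at hl hmin
    have hle : ∀ i, i < l → y i ≤ x i := fun i hi => by
      by_contra h
      exact absurd (hmin i (not_le.1 h)) (not_le.2 hi)
    obtain ⟨j, hjl, hj⟩ : ∃ j, j < l ∧ y j < x j := by
      by_contra! hcon
      have h1 := hpre l
      have : ∑ i ∈ Iic l, x i < ∑ i ∈ Iic l, y i := by
        apply Finset.sum_lt_sum
        · intro i hi
          rcases (mem_Iic.1 hi).lt_or_eq with h | h
          · exact hcon i h
          · rw [h]; exact hl.le
        · exact ⟨l, by simp, hl⟩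
      linarith
    have hyy := hanti hjl.le
    set δ := min (x j - y j) (y l - x l) with hδ
    have hd0 : 0 < δ := lt_min (by linarith) (by linarith)
    have hd1 : δ ≤ x j - y j := min_le_left _ _
    have hd2 : δ ≤ y l - x l := min_le_right _ _
    have hjl' := hjl.ne
    set x' : Fin n → ℝ := fun i => x i + ((if i = l then δ else 0) - (if i = j then δ else 0)) with hx'
    have ej : x' j = x j - δ := by simp [hx', hjl']; ring
    have el : x' l = x l + δ := by simp [hx', hjl'.symm]
    have eo : ∀ i, i ≠ j → i ≠ l → x' i = x i := fun i h1 h2 => by simp [hx', h1, h2]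
    have hy0 := hy j
    have hx0 := hx l
    refine le_trans (TT_step x x' hx j l hjl' (fun i h1 h2 => (eo i h1 h2).symm) (by linarith) (by linarith)
      (by linarith) k r) (ih x' ?_ ?_ ?_ ?_)
    · intro i
      by_cases h1 : i = j
      · subst h1; linarith
      by_cases h2 : i = l
      · subst h2; linarith
      rw [eo i h1 h2]; exact hx i
    · have : (univ.filter fun i => x' i ≠ y i) ⊂ (univ.filter fun i => x i ≠ y i) := by
        rw [Finset.ssubset_iff_of_subset]
        · rcases min_choice (x j - y j) (y l - x l) with h | h
          · refine ⟨j, by simp [hj.ne'], ?_⟩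
            have : x' j = y j := by rw [ej, hδ, h]; ring
            simp [this]
          · refine ⟨l, by simp [hl.ne], ?_⟩
            have : x' l = y l := by rw [el, hδ, h]; ring
            simp [this]
        · intro i
          simp only [mem_filter, mem_univ, true_and]
          by_cases h1 : i = j
          · subst h1; exact fun _ => hj.ne'
          by_cases h2 : i = l
          · subst h2; exact fun _ => hl.ne
          rw [eo i h1 h2]; exact id
      have := card_lt_card this
      omega
    · simp only [hx', sum_add_distrib, sum_sub_distrib, sum_ite_eq', mem_univ, if_true]
      linarith
    · intro m
      by_cases hm : l ≤ m
      · have := hpre m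
        simp only [hx', sum_add_distrib, sum_sub_distrib, sum_ite_eq', mem_Iic, hm, hjl.le.trans hm, if_true]
        linarith
      · apply Finset.sum_le_sum
        intro i hi
        have hil : i < l := lt_of_le_of_lt (mem_Iic.1 hi) (not_le.1 hm)
        by_cases h1 : i = j
        · subst h1; linarith
        rw [eo i h1 hil.ne]; exact hle i hil

lemma sum_le_prefix {n : ℕ} (z : Fin n → ℝ) (hz : Antitone z) (m : Fin n) (A : Finset (Fin n))
    (hA : A.card = (Iic m).card) : ∑ i ∈ A, z i ≤ ∑ i ∈ Iic m, z i := by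
  have h1 : ∑ i ∈ A, (z i - z m) ≤ ∑ i ∈ Iic m, (z i - z m) := by
    rw [← Finset.sum_filter_add_sum_filter_not A (fun i => i ≤ m)]
    have ha : ∑ i ∈ A.filter (fun i => ¬ i ≤ m), (z i - z m) ≤ 0 := by
      apply Finset.sum_nonpos
      intro i hi
      have := hz (not_le.1 (mem_filter.1 hi).2).le
      linarith
    have hb : ∑ i ∈ A.filter (fun i => i ≤ m), (z i - z m) ≤ ∑ i ∈ Iic m, (z i - z m) := by
      apply Finset.sum_le_sum_of_subset_of_nonneg
      · intro i hi; exact mem_Iic.2 (mem_filter.1 hi).2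
      · intro i hi _
        have := hz (mem_Iic.1 hi)
        linarith
    linarith
  simp only [sum_sub_distrib, sum_const, hA] at h1
  linarith

lemma TT_perm {n : ℕ} (x : Fin n → ℝ) (σ : Equiv.Perm (Fin n)) (k r : ℕ) :
    G n k r (x ∘ σ) = G n k r x := by
  unfold G
  refine Finset.sum_equiv (Equiv.arrowCongr σ (Equiv.refl _)) ?_ ?_
  · intro κ
    simp only [mem_filter, mem_univ, true_and, Equiv.arrowCongr_apply, Equiv.coe_refl,
      Function.comp_apply, id_eq]
    rw [Equiv.sum_comp σ.symm (fun i => (κ i : ℕ))]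
    have : (univ.filter fun i => (κ (σ.symm i) : ℕ) ≠ 0).card = (univ.filter fun i => (κ i : ℕ) ≠ 0).card := by
      apply Finset.card_equiv σ.symm
      intro i; simp
    rw [this]
  · intro κ _
    rw [← Equiv.prod_comp σ (fun i => x i ^ _ / _)]
    simp

lemma exists_anti {n : ℕ} (x : Fin n → ℝ) : ∃ σ : Equiv.Perm (Fin n), Antitone (x ∘ σ) := by
  refine ⟨Tuple.sort (fun i => - x i), fun a b h => ?_⟩
  have := Tuple.monotone_sort (fun i => - x i) h
  simpa using this

theorem stmt11 (n k r : ℕ) (hn : 1 ≤ n) (hk : 1 ≤ k) (hr : 1 ≤ r)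
    (x y : Fin n → ℝ) (hx : ∀ i, 0 ≤ x i) (hy : ∀ i, 0 ≤ y i)
    (hxy : Majorizes n x y) :
    G n k r x ≤ G n k r y := by
  obtain ⟨σ, hσ⟩ := exists_anti x
  obtain ⟨τ, hτ⟩ := exists_anti y
  obtain ⟨hs, hm⟩ := hxy
  rw [← TT_perm x σ, ← TT_perm y τ]
  have hsum : ∑ i, (x ∘ σ) i = ∑ i, (y ∘ τ) i := by
    simp only [Function.comp_apply]
    rw [Equiv.sum_comp σ x, Equiv.sum_comp τ y, hs]
  unfold G
  rw [G_eq_aux, G_eq_aux]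
  refine TT_chain (y ∘ τ) (fun i => hy _) hτ k r _ (x ∘ σ) (fun i => hx _) le_rfl hsum ?_
  intro m
  by_cases hmn : (m : ℕ) + 1 = n
  · have : Iic m = univ := by
      ext i
      simp only [mem_Iic, mem_univ, iff_true]
      exact Fin.le_def.2 (by omega)
    rw [this, hsum]
  · have hcard : (Iic m).card = m + 1 := by simp
    have h1 := hm (m + 1) (by omega) (by omega)
    have h2 : ∑ i ∈ Iic m, (y ∘ τ) i ≤ sMax n (m + 1) y := by
      apply le_csSup
      · apply Set.Finite.bddAbove
        apply (Set.finite_range (fun A : Finset (Fin n) => ∑ i ∈ A, y i)).subset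
        rintro s ⟨A, _, rfl⟩
        exact ⟨A, rfl⟩
      · exact ⟨(Iic m).map τ.toEmbedding, by rw [card_map, hcard], by simp⟩
    have h3 : sMax n (m + 1) x ≤ ∑ i ∈ Iic m, (x ∘ σ) i := by
      apply csSup_le
      · exact ⟨_, (Iic m), hcard, rfl⟩
      · rintro s ⟨A, hA, rfl⟩
        have := sum_le_prefix (x ∘ σ) hσ m (A.map σ.symm.toEmbedding) (by rw [card_map, hcard, hA])
        simpa using this
    linarith
end

section
/- Let n ≥ 1, k ≥ 1, and 1 ≤ r ≤ n be integers, and let x ∈ [0,∞)^n. Then (1/k!)·M_{k,r}(x) = ∑_{j=1}^{r} C(n−j, r−j) · (Ḡ_{k,j+1}(x) − Ḡ_{k,j}(x)), where C(a,b) denotes the binomial coefficient. -/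
open Finset MeasureTheory

/-- `M n k r x = ∑_{1 ≤ i₁ < ⋯ < i_r ≤ n} (x_{i₁} + ⋯ + x_{i_r})^k`. -/
noncomputable def M (n k r : ℕ) (x : Fin n → ℝ) : ℝ :=
  ∑ A ∈ Finset.powersetCard r (Finset.univ : Finset (Fin n)), (∑ i ∈ A, x i) ^ k

/-- `Ḡ n k r x = (x₁ + ⋯ + x_n)^k / k! − G n k r x`. -/
noncomputable def Gbar (n k r : ℕ) (x : Fin n → ℝ) : ℝ :=
  (∑ i, x i) ^ k / (Nat.factorial k) - G n k r x


lemma aux_count (n r : ℕ) (S : Finset (Fin n)) :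
    (((powersetCard r (univ : Finset (Fin n))).filter (fun A => S ⊆ A)).card)
      = if S.card ≤ r then Nat.choose (n - S.card) (r - S.card) else 0 := by
  split_ifs with h
  · have : (powersetCard (r - S.card) Sᶜ).card = Nat.choose (n - S.card) (r - S.card) := by
      rw [card_powersetCard, card_compl, Fintype.card_fin]
    rw [← this]
    refine card_bij' (fun A _ => A \ S) (fun B _ => B ∪ S) ?_ ?_ ?_ ?_
    · intro A hA
      simp only [mem_filter, mem_powersetCard, subset_univ, true_and] at hA
      rw [mem_powersetCard, card_sdiff_of_subset hA.2, hA.1]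
      refine ⟨?_, rfl⟩
      intro i hi
      simp at hi ⊢
      exact hi.2
    · intro B hB
      rw [mem_powersetCard] at hB
      have hd : Disjoint B S := by
        rw [← Finset.subset_compl_iff_disjoint_right]; exact hB.1
      simp only [mem_filter, mem_powersetCard, subset_univ, true_and]
      rw [card_union_of_disjoint hd, hB.2]
      exact ⟨by omega, subset_union_right⟩
    · intro A hA
      simp only [mem_filter] at hA
      exact sdiff_union_of_subset hA.2
    · intro B hB
      rw [mem_powersetCard] at hB
      have hd : Disjoint B S := by
        rw [← Finset.subset_compl_iff_disjoint_right]; exact hB.1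
      exact union_sdiff_cancel_right hd
  · rw [card_eq_zero, filter_eq_empty_iff]
    intro A hA hS
    rw [mem_powersetCard] at hA
    have := card_le_card hS
    omega

lemma aux_pow (n k : ℕ) (x : Fin n → ℝ) (A : Finset (Fin n)) :
    (∑ i ∈ A, x i) ^ k / (Nat.factorial k) =
      ∑ κ ∈ Finset.univ.filter (fun κ : Fin n → Fin (k + 1) => (∑ i, (κ i : ℕ)) = k),
        if (univ.filter fun i => (κ i : ℕ) ≠ 0) ⊆ A then
          ∏ i, x i ^ (κ i : ℕ) / (Nat.factorial (κ i : ℕ)) else (0 : ℝ) := by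
  rw [sum_pow_eq_sum_piAntidiag, sum_div, ← sum_filter]
  symm
  refine sum_bij (fun κ _ i => (κ i : ℕ)) ?_ ?_ ?_ ?_
  · intro κ hκ
    simp only [mem_filter, mem_univ, true_and] at hκ
    rw [mem_piAntidiag]
    constructor
    · refine Eq.trans ?_ hκ.1
      apply sum_subset (subset_univ _)
      intro i _ hi
      by_contra h
      exact hi (hκ.2 (by simpa using h))
    · intro i hi
      exact hκ.2 (by simpa using hi)
  · intro κ _ κ' _ h
    funext i
    exact Fin.ext (congrFun h i)
  · intro p hp
    rw [mem_piAntidiag] at hp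
    have hs : ∑ i, p i = k := by
      rw [← hp.1]
      symm
      apply sum_subset (subset_univ _)
      intro i _ hi
      by_contra h
      exact hi (hp.2 i h)
    have hle : ∀ i, p i < k + 1 := by
      intro i
      have := single_le_sum (f := p) (fun i _ => Nat.zero_le _) (mem_univ i)
      omega
    refine ⟨fun i => ⟨p i, hle i⟩, ?_, rfl⟩
    simp only [mem_filter, mem_univ, true_and]
    refine ⟨hs, ?_⟩
    intro i hi
    simp only [mem_filter, mem_univ, true_and] at hi
    exact hp.2 i hi
  · intro κ hκ
    simp only [mem_filter, mem_univ, true_and] at hκ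
    have h0 : ∀ i, i ∉ A → (κ i : ℕ) = 0 := by
      intro i hi
      by_contra h
      exact hi (hκ.2 (by simpa using h))
    have hs : ∑ i ∈ A, (κ i : ℕ) = k := by
      refine Eq.trans ?_ hκ.1
      exact sum_subset (subset_univ _) (fun i _ hi => h0 i hi)
    have hp : ∏ i, x i ^ (κ i : ℕ) / (Nat.factorial (κ i : ℕ) : ℝ)
        = ∏ i ∈ A, x i ^ (κ i : ℕ) / (Nat.factorial (κ i : ℕ) : ℝ) := by
      symm
      apply prod_subset (subset_univ _)
      intro i _ hi
      simp [h0 i hi]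
    have hm := Nat.multinomial_spec A (fun i => (κ i : ℕ))
    rw [hs] at hm
    have hm' : (∏ i ∈ A, (Nat.factorial (κ i : ℕ) : ℝ)) *
        (Nat.multinomial A (fun i => (κ i : ℕ)) : ℝ) = (Nat.factorial k : ℝ) := by
      exact_mod_cast hm
    have hne : (∏ i ∈ A, (Nat.factorial (κ i : ℕ) : ℝ)) ≠ 0 :=
      prod_ne_zero_iff.2 fun i _ => by positivity
    have hne2 : (Nat.factorial k : ℝ) ≠ 0 := by positivity
    rw [hp, prod_div_distrib, div_eq_div_iff hne hne2, ← hm']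
    ring

lemma aux_diff (n k j : ℕ) (x : Fin n → ℝ) :
    Gbar n k (j + 1) x - Gbar n k j x =
      ∑ κ ∈ Finset.univ.filter (fun κ : Fin n → Fin (k + 1) => (∑ i, (κ i : ℕ)) = k),
        if (univ.filter fun i => (κ i : ℕ) ≠ 0).card = j then
          ∏ i, x i ^ (κ i : ℕ) / (Nat.factorial (κ i : ℕ)) else (0 : ℝ) := by
  unfold Gbar G
  rw [sub_sub_sub_cancel_left, ← filter_filter, ← filter_filter, sum_filter, sum_filter (s := filter _ _),
    ← sum_sub_distrib]
  apply sum_congr rfl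
  intro κ _
  split_ifs <;> first | omega | simp

theorem stmt17 (n k r : ℕ) (hn : 1 ≤ n) (hk : 1 ≤ k) (hr : 1 ≤ r) (hrn : r ≤ n)
    (x : Fin n → ℝ) (hx : ∀ i, 0 ≤ x i) :
    M n k r x / (Nat.factorial k)
      = ∑ j ∈ Finset.Icc 1 r,
          (Nat.choose (n - j) (r - j) : ℝ) * (Gbar n k (j + 1) x - Gbar n k j x) := by
  unfold M
  simp_rw [aux_diff, sum_div, aux_pow, mul_sum]
  rw [sum_comm, sum_comm (s := Icc 1 r)]
  apply sum_congr rfl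
  intro κ hκ
  simp only [mem_filter, mem_univ, true_and] at hκ
  have hpos : 1 ≤ (univ.filter fun i => (κ i : ℕ) ≠ 0).card := by
    rw [Nat.one_le_iff_ne_zero, Ne, card_eq_zero, filter_eq_empty_iff]
    intro h
    have : ∑ i, (κ i : ℕ) = 0 := sum_eq_zero fun i hi => by simpa using h hi
    omega
  rw [← sum_filter, sum_const, aux_count]
  simp only [mul_ite, mul_zero]
  rw [sum_ite_eq]
  simp only [mem_Icc, hpos, true_and]
  split_ifs <;> simp
end
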